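/- Let x̂ be an observable direction, i.e. ξ_max − ξ_min ≥ T. Then for every y ∈ ℝ^d, the test function φ_y^{(x̂)} belongs to the range of the data-to-pattern operator L^{(x̂)} : L²(t_min, t_max) → L²(0, K) if and only if y ∈ K_Γ^{(x̂)}, i.e. if and only if ξ_min − t_min ≤ x̂·y ≤ ξ_max − t_max. -/

import Mathlib

open MeasureTheory

noncomputable section

/-!
Write `𝓛ψ(z) = ∫ exp(z h(t)) ψ(t) dt`, so that `(Lψ)(τ) = 𝓛ψ(-iτ)`, and let `c = x̂·y`.

If `φ_y = Lψ`, both sides extend to entire functions which agree on a segment of the imaginary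
axis, hence everywhere. On the real axis `𝓛ψ(s)` is at most `‖ψ‖₁ exp(s ξ_max)` for `s > 0`,
so Chernoff's bound applied to the moment generating function of `t ↦ c + t` shows that this
function does not exceed `ξ_max`; letting `s → -∞` bounds it below by `ξ_min`.

Conversely, if `c + t_min = h(t₁)` and `c + t_max = h(t₂)`, the substitution `x = h(t)` turns
`∫ f(c + t) dt` into `∫_{t₁}^{t₂} f(h(t)) h'(t) dt`, and `ψ = ± h' / T` on the interval between
`t₁` and `t₂`, extended by zero, is a preimage of `φ_y`.
-/

open ProbabilityTheory Filter Topology Set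
open scoped ENNReal

section WeightedMGF

variable {α β : Type*} {mα : MeasurableSpace α} {mβ : MeasurableSpace β}
  {μ : Measure α} {ν : Measure β} {g : α → ℝ} {u : β → ℝ} {ψ : α → ℂ} {m M : ℝ}

/-- The complex moment generating function of `g` against the complex density `ψ`, a weighted
version of `ProbabilityTheory.complexMGF`. The data-to-pattern operator is its restriction to the
imaginary axis: `(Lψ)(τ) = weightedMGF h ψ μ (-iτ)` with `μ` Lebesgue measure on
`(t_min, t_max)`. -/
def weightedMGF (g : α → ℝ) (ψ : α → ℂ) (μ : Measure α) (z : ℂ) : ℂ :=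
  ∫ t, Complex.exp (z * g t) * ψ t ∂μ

lemma weightedMGF_neg (z : ℂ) : weightedMGF (-g) ψ μ z = weightedMGF g ψ μ (-z) := by
  simp only [weightedMGF, Pi.neg_apply, Complex.ofReal_neg, mul_neg, neg_mul]

lemma weightedMGF_one : weightedMGF g 1 μ = complexMGF g μ := by
  ext z
  simp only [weightedMGF, complexMGF, Pi.one_apply, mul_one]

lemma norm_cexp_mul_ofReal_le {z : ℂ} {x r R : ℝ} (hz : ‖z‖ ≤ r) (hx : |x| ≤ R) :
    ‖Complex.exp (z * x)‖ ≤ Real.exp (r * R) := by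
  have hr : 0 ≤ r := (norm_nonneg z).trans hz
  refine (Complex.norm_exp_le_exp_norm _).trans (Real.exp_le_exp.mpr ?_)
  rw [norm_mul, Complex.norm_real, Real.norm_eq_abs]
  gcongr

lemma differentiable_weightedMGF (hg : AEMeasurable g μ) {R : ℝ} (hR : ∀ᵐ t ∂μ, |g t| ≤ R)
    (hψ : Integrable ψ μ) : Differentiable ℂ (weightedMGF g ψ μ) := by
  intro z₀
  have hg' : AEStronglyMeasurable (fun t ↦ (g t : ℂ)) μ :=
    (Complex.measurable_ofReal.comp_aemeasurable hg).aestronglyMeasurable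
  have hexp (z : ℂ) : AEStronglyMeasurable (fun t ↦ Complex.exp (z * g t)) μ :=
    Complex.continuous_exp.comp_aestronglyMeasurable (hg'.const_mul z)
  have hderiv := hasDerivAt_integral_of_dominated_loc_of_deriv_le (μ := μ) (x₀ := z₀)
    (F := fun z t ↦ Complex.exp (z * g t) * ψ t)
    (F' := fun z t ↦ Complex.exp (z * g t) * g t * ψ t)
    (bound := fun t ↦ Real.exp ((‖z₀‖ + 1) * R) * R * ‖ψ t‖)
    (Metric.ball_mem_nhds z₀ one_pos)
    (Eventually.of_forall fun z ↦ (hexp z).mul hψ.1)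
    (hψ.bdd_mul (hexp z₀) (hR.mono fun t ht ↦ norm_cexp_mul_ofReal_le le_rfl ht))
    (((hexp z₀).mul hg').mul hψ.1) ?_ (hψ.norm.const_mul _) ?_
  · exact hderiv.2.differentiableAt
  · filter_upwards [hR] with t ht z hz
    have hz' : ‖z‖ ≤ ‖z₀‖ + 1 := by
      linarith [norm_le_norm_add_norm_sub' z z₀, mem_ball_iff_norm.mp hz]
    rw [norm_mul, norm_mul, Complex.norm_real, Real.norm_eq_abs]
    gcongr
    exact norm_cexp_mul_ofReal_le hz' ht
  · refine Eventually.of_forall fun t z _ ↦ ?_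
    simpa only [one_mul] using! (((hasDerivAt_id z).mul_const (g t : ℂ)).cexp.mul_const (ψ t))

lemma differentiable_complexMGF_of_abs_le [IsFiniteMeasure μ] (hg : AEMeasurable g μ) {R : ℝ}
    (hR : ∀ᵐ t ∂μ, |g t| ≤ R) : Differentiable ℂ (complexMGF g μ) :=
  weightedMGF_one (μ := μ) ▸ differentiable_weightedMGF hg hR (integrable_const 1)

lemma norm_weightedMGF_ofReal_le (hM : ∀ᵐ t ∂μ, g t ≤ M) (hψ : Integrable ψ μ) {s : ℝ}
    (hs : 0 ≤ s) : ‖weightedMGF g ψ μ s‖ ≤ Real.exp (s * M) * ∫ t, ‖ψ t‖ ∂μ := by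
  rw [← integral_const_mul]
  refine norm_integral_le_of_norm_le (hψ.norm.const_mul _) (hM.mono fun t ht ↦ ?_)
  rw [norm_mul, ← Complex.ofReal_mul, Complex.norm_exp_ofReal]
  gcongr

lemma ae_le_of_mgf_le [IsFiniteMeasure ν] {C : ℝ}
    (hint : ∀ s > 0, Integrable (fun t ↦ Real.exp (s * u t)) ν)
    (hC : ∀ s > 0, mgf u ν s ≤ C * Real.exp (s * M)) : ∀ᵐ t ∂ν, u t ≤ M := by
  have chernoff (b s : ℝ) (hs : 0 < s) :
      ν.real {t | b ≤ u t} ≤ C * Real.exp (-(s * (b - M))) :=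
    calc ν.real {t | b ≤ u t} ≤ Real.exp (-s * b) * mgf u ν s :=
          measure_ge_le_exp_mul_mgf b hs.le (hint s hs)
      _ ≤ Real.exp (-s * b) * (C * Real.exp (s * M)) := by gcongr; exact hC s hs
      _ = C * Real.exp (-(s * (b - M))) := by
          rw [mul_left_comm, ← Real.exp_add]; congr 2; ring
  have ae_lt (b : ℝ) (hb : M < b) : ∀ᵐ t ∂ν, u t < b := by
    have decay : Tendsto (fun s ↦ C * Real.exp (-(s * (b - M)))) atTop (𝓝 0) := by
      have hexponent : Tendsto (fun s ↦ s * (b - M)) atTop atTop :=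
        tendsto_id.atTop_mul_const (sub_pos.mpr hb)
      simpa only [mul_zero, Function.comp_def] using
        (Real.tendsto_exp_neg_atTop_nhds_zero.comp hexponent).const_mul C
    have null : ν.real {t | b ≤ u t} ≤ 0 :=
      ge_of_tendsto decay ((eventually_gt_atTop 0).mono (chernoff b))
    simpa only [ae_iff, not_lt, measureReal_eq_zero_iff (measure_ne_top ν _)] using
      le_antisymm null measureReal_nonneg
  obtain ⟨b, -, hMb, hb⟩ := exists_seq_strictAnti_tendsto M
  filter_upwards [ae_all_iff.mpr fun n ↦ ae_lt (b n) (hMb n)] with t ht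
  exact ge_of_tendsto' hb fun n ↦ (ht n).le

lemma ae_le_of_weightedMGF_eq_mul_mgf [IsFiniteMeasure ν] {κ : ℂ} (hκ : κ ≠ 0)
    (hM : ∀ᵐ t ∂μ, g t ≤ M) (hψ : Integrable ψ μ)
    (hint : ∀ s > 0, Integrable (fun t ↦ Real.exp (s * u t)) ν)
    (heq : ∀ s : ℝ, 0 < s → weightedMGF g ψ μ s = κ * mgf u ν s) : ∀ᵐ t ∂ν, u t ≤ M := by
  refine ae_le_of_mgf_le (C := (∫ t, ‖ψ t‖ ∂μ) / ‖κ‖) hint fun s hs ↦ ?_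
  have hnorm : ‖κ‖ * mgf u ν s ≤ Real.exp (s * M) * ∫ t, ‖ψ t‖ ∂μ := by
    simpa only [heq s hs, norm_mul, Complex.norm_real, Real.norm_of_nonneg mgf_nonneg] using
      norm_weightedMGF_ofReal_le hM hψ hs.le
  rw [div_mul_eq_mul_div, le_div_iff₀' (norm_pos_iff.mpr hκ), mul_comm (∫ t, ‖ψ t‖ ∂μ)]
  exact hnorm

lemma eq_of_ae_eq_comp_mul_ofReal {F G : ℂ → ℂ} (hF : Differentiable ℂ F)
    (hG : Differentiable ℂ G) {w : ℂ} (hw : w ≠ 0) {U : Set ℝ} (hU : IsOpen U)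
    (hne : U.Nonempty) (h : ∀ᵐ k : ℝ ∂volume.restrict U, F (w * k) = G (w * k)) : F = G := by
  have hEq : EqOn (fun k : ℝ ↦ F (w * k)) (fun k : ℝ ↦ G (w * k)) U :=
    Measure.eqOn_open_of_ae_eq h hU (hF.continuous.comp (by fun_prop)).continuousOn
      (hG.continuous.comp (by fun_prop)).continuousOn
  obtain ⟨k₀, hk₀⟩ := hne
  have hline : Tendsto (fun k : ℝ ↦ w * k) (𝓝[≠] k₀) (𝓝[≠] (w * k₀)) :=
    ((by fun_prop : Continuous fun k : ℝ ↦ w * k).continuousWithinAt).tendsto_nhdsWithin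
      fun k hk ↦ by simpa [hw] using hk
  refine (Complex.analyticOnNhd_univ_iff_differentiable.mpr hF).eq_of_frequently_eq
    (Complex.analyticOnNhd_univ_iff_differentiable.mpr hG)
    (hline.frequently (Eventually.frequently ?_))
  filter_upwards [nhdsWithin_le_nhds (hU.mem_nhds hk₀)] with k hk using hEq hk

lemma ae_mem_Icc_of_weightedMGF_ae_eq [IsFiniteMeasure ν] {κ : ℂ} (hκ : κ ≠ 0)
    (hg : AEMeasurable g μ) (hgI : ∀ᵐ t ∂μ, g t ∈ Icc m M) (hψ : Integrable ψ μ)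
    (hu : AEMeasurable u ν) {a b : ℝ} (huI : ∀ᵐ t ∂ν, u t ∈ Icc a b)
    {w : ℂ} (hw : w ≠ 0) {U : Set ℝ} (hU : IsOpen U) (hne : U.Nonempty)
    (h : ∀ᵐ k : ℝ ∂volume.restrict U,
      weightedMGF g ψ μ (w * k) = κ * complexMGF u ν (w * k)) :
    ∀ᵐ t ∂ν, u t ∈ Icc m M := by
  have hEntire : weightedMGF g ψ μ = fun z ↦ κ * complexMGF u ν z :=
    eq_of_ae_eq_comp_mul_ofReal
      (differentiable_weightedMGF hg (hgI.mono fun t ht ↦ abs_le_max_abs_abs ht.1 ht.2) hψ)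
      ((differentiable_complexMGF_of_abs_le hu
        (huI.mono fun t ht ↦ abs_le_max_abs_abs ht.1 ht.2)).const_mul κ) hw hU hne h
  have hReal (s : ℝ) : weightedMGF g ψ μ s = κ * mgf u ν s := by
    rw [congrFun hEntire s, complexMGF_ofReal]
  have hle : ∀ᵐ t ∂ν, u t ≤ M :=
    ae_le_of_weightedMGF_eq_mul_mgf hκ (hgI.mono fun t ht ↦ ht.2) hψ
      (fun s _ ↦ integrable_exp_mul_of_mem_Icc hu huI) fun s _ ↦ hReal s
  have hge : ∀ᵐ t ∂ν, (-u) t ≤ -m :=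
    ae_le_of_weightedMGF_eq_mul_mgf hκ (g := -g) (hgI.mono fun t ht ↦ neg_le_neg ht.1) hψ
      (fun s _ ↦ integrable_exp_mul_of_mem_Icc hu.neg
        (huI.mono fun t ht ↦ ⟨neg_le_neg ht.2, neg_le_neg ht.1⟩))
      fun s _ ↦ by rw [weightedMGF_neg, mgf_neg, ← hReal, Complex.ofReal_neg]
  filter_upwards [hle, hge] with t hle hge using ⟨neg_le_neg_iff.mp hge, hle⟩

end WeightedMGF

section Interval

lemma closure_subset_of_ae_restrict_mem {X : Type*} [TopologicalSpace X] [MeasurableSpace X]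
    [OpensMeasurableSpace X] {μ : Measure X} [μ.IsOpenPosMeasure] {U S : Set X} (hU : IsOpen U)
    (hS : IsClosed S) (h : ∀ᵐ x ∂μ.restrict U, x ∈ S) : closure U ⊆ S := by
  have hnull : μ (U \ S) = 0 := by
    rw [ae_restrict_iff' hU.measurableSet, ae_iff] at h
    simpa only [Classical.not_imp] using! h
  exact closure_minimal (sdiff_eq_empty.mp ((hU.sdiff hS).measure_eq_zero_iff μ |>.mp hnull)) hS

variable {a b x₁ x₂ : ℝ} {h : ℝ → ℝ}

lemma Icc_subset_image_of_weightedMGF_ae_eq (hab : a ≤ b) (hh : ContinuousOn h (Icc a b))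
    {ψ : ℝ → ℂ} (hψ : IntegrableOn ψ (Ioo a b)) (hx : x₁ < x₂) {κ : ℂ} (hκ : κ ≠ 0)
    {w : ℂ} (hw : w ≠ 0) {U : Set ℝ} (hU : IsOpen U) (hne : U.Nonempty)
    (heq : ∀ᵐ k : ℝ ∂volume.restrict U,
      weightedMGF h ψ (volume.restrict (Ioo a b)) (w * k)
        = κ * complexMGF id (volume.restrict (Ioo x₁ x₂)) (w * k)) :
    Icc x₁ x₂ ⊆ h '' Icc a b := by
  rw [hh.image_Icc hab]
  have hmem : ∀ᵐ t ∂volume.restrict (Ioo a b),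
      h t ∈ Icc (sInf (h '' Icc a b)) (sSup (h '' Icc a b)) := by
    filter_upwards [ae_restrict_mem measurableSet_Ioo] with t ht
    exact hh.image_Icc hab ▸ mem_image_of_mem h (Ioo_subset_Icc_self ht)
  have hae := ae_mem_Icc_of_weightedMGF_ae_eq hκ
    ((hh.mono Ioo_subset_Icc_self).aemeasurable measurableSet_Ioo) hmem hψ aemeasurable_id
    ((ae_restrict_mem measurableSet_Ioo).mono fun _ ht ↦ Ioo_subset_Icc_self ht)
    hw hU hne heq
  rw [← closure_Ioo hx.ne]
  exact closure_subset_of_ae_restrict_mem isOpen_Ioo isClosed_Icc hae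

lemma integral_derivWithin_smul_comp_of_contDiffOn {E : Type*} [NormedAddCommGroup E]
    [NormedSpace ℝ E] (hab : a < b) (hh : ContDiffOn ℝ 1 h (Icc a b)) {t₁ t₂ : ℝ}
    (ht₁ : t₁ ∈ Icc a b) (ht₂ : t₂ ∈ Icc a b) {f : ℝ → E} (hf : Continuous f) :
    ∫ t in t₁..t₂, derivWithin h (Icc a b) t • f (h t) = ∫ x in h t₁..h t₂, f x := by
  have hsub : uIcc t₁ t₂ ⊆ Icc a b := ordConnected_Icc.uIcc_subset ht₁ ht₂
  have hsub' : Ioo (min t₁ t₂) (max t₁ t₂) ⊆ Ioo a b :=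
    Ioo_subset_Ioo (le_min ht₁.1 ht₂.1) (max_le ht₁.2 ht₂.2)
  refine intervalIntegral.integral_deriv_smul_comp'' (hh.continuousOn.mono hsub) (fun t ht ↦ ?_)
    ((hh.continuousOn_derivWithin (uniqueDiffOn_Icc hab) le_rfl).mono hsub) hf.continuousOn
  have hnhds : Icc a b ∈ 𝓝 t := Icc_mem_nhds (hsub' ht).1 (hsub' ht).2
  exact ((hh.differentiableOn one_ne_zero t (mem_of_mem_nhds hnhds)).hasDerivWithinAt.hasDerivAt
    hnhds).hasDerivWithinAt

lemma memLp_top_restrict_Ioo_of_continuousOn {E : Type*} [NormedAddCommGroup E]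
    {f : ℝ → E} (hf : ContinuousOn f (Icc a b)) : MemLp f ∞ (volume.restrict (Ioo a b)) := by
  obtain ⟨B, hB⟩ := isCompact_Icc.exists_bound_of_continuousOn hf
  refine memLp_top_of_bound
    ((hf.mono Ioo_subset_Icc_self).aestronglyMeasurable measurableSet_Ioo) B ?_
  filter_upwards [ae_restrict_mem measurableSet_Ioo] with t ht
  exact hB t (Ioo_subset_Icc_self ht)

lemma exists_memLp_top_integral_smul_comp_eq {E : Type*} [NormedAddCommGroup E]
    [NormedSpace ℝ E] (hab : a < b) (hh : ContDiffOn ℝ 1 h (Icc a b))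
    (hx₁ : x₁ ∈ h '' Icc a b) (hx₂ : x₂ ∈ h '' Icc a b) :
    ∃ ρ : ℝ → ℝ, MemLp ρ ∞ (volume.restrict (Ioo a b)) ∧ ∀ f : ℝ → E, Continuous f →
      ∫ t in Ioo a b, ρ t • f (h t) = ∫ x in x₁..x₂, f x := by
  obtain ⟨t₁, ht₁, rfl⟩ := hx₁
  obtain ⟨t₂, ht₂, rfl⟩ := hx₂
  let ε : ℝ := if t₁ ≤ t₂ then 1 else -1
  have hsub : uIoc t₁ t₂ ⊆ Icc a b :=
    uIoc_subset_uIcc.trans (ordConnected_Icc.uIcc_subset ht₁ ht₂)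
  refine ⟨(uIoc t₁ t₂).indicator (ε • derivWithin h (Icc a b)), ?_, fun f hf ↦ ?_⟩
  · exact ((memLp_top_restrict_Ioo_of_continuousOn
      (hh.continuousOn_derivWithin (uniqueDiffOn_Icc hab) le_rfl)).const_smul ε).indicator
        measurableSet_uIoc
  · calc ∫ t in Ioo a b, (uIoc t₁ t₂).indicator (ε • derivWithin h (Icc a b)) t • f (h t)
        = ∫ t in Icc a b,
            (uIoc t₁ t₂).indicator (fun t ↦ ε • derivWithin h (Icc a b) t • f (h t)) t := by
          simp only [integral_Icc_eq_integral_Ioo, Pi.smul_def, indicator_smul_left, smul_assoc]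
      _ = ε • ∫ t in uIoc t₁ t₂, derivWithin h (Icc a b) t • f (h t) := by
          rw [setIntegral_indicator measurableSet_uIoc, inter_eq_right.mpr hsub, integral_smul]
      _ = ∫ x in h t₁..h t₂, f x := by
          rw [← integral_derivWithin_smul_comp_of_contDiffOn hab hh ht₁ ht₂ hf,
            intervalIntegral.intervalIntegral_eq_integral_uIoc]

lemma exists_Lp_weightedMGF_eq (hab : a < b) (hh : ContDiffOn ℝ 1 h (Icc a b)) (hx : x₁ ≤ x₂)
    (hsub : Icc x₁ x₂ ⊆ h '' Icc a b) (κ : ℂ) (r : ℝ≥0∞) :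
    ∃ ψ : Lp ℂ r (volume.restrict (Ioo a b)), ∀ z : ℂ,
      weightedMGF h ψ (volume.restrict (Ioo a b)) z
        = κ * complexMGF id (volume.restrict (Ioo x₁ x₂)) z := by
  obtain ⟨ρ, hρ, hint⟩ := exists_memLp_top_integral_smul_comp_eq (E := ℂ) hab hh
    (hsub (left_mem_Icc.mpr hx)) (hsub (right_mem_Icc.mpr hx))
  have hψ : MemLp (fun t ↦ κ * (ρ t : ℂ)) r (volume.restrict (Ioo a b)) :=
    ((hρ.mono_exponent le_top).ofReal (K := ℂ)).const_mul κ
  refine ⟨hψ.toLp, fun z ↦ ?_⟩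
  calc weightedMGF h hψ.toLp (volume.restrict (Ioo a b)) z
      = ∫ t in Ioo a b, κ * (ρ t • Complex.exp (z * h t)) := by
        refine integral_congr_ae (hψ.coeFn_toLp.mono fun t ht ↦ ?_)
        simp only [ht, Complex.real_smul]
        ring
    _ = κ * ∫ x in x₁..x₂, Complex.exp (z * x) := by
        rw [integral_const_mul, hint (fun x ↦ Complex.exp (z * x)) (by fun_prop)]
    _ = κ * complexMGF id (volume.restrict (Ioo x₁ x₂)) z := by
        rw [intervalIntegral.integral_of_le hx, integral_Ioc_eq_integral_Ioo]
        rfl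

theorem exists_Lp_weightedMGF_ae_eq_iff (hab : a < b) (hh : ContDiffOn ℝ 1 h (Icc a b))
    (hx : x₁ < x₂) {κ : ℂ} (hκ : κ ≠ 0) {r : ℝ≥0∞} (hr : 1 ≤ r) {w : ℂ} (hw : w ≠ 0)
    {U : Set ℝ} (hU : IsOpen U) (hne : U.Nonempty) :
    (∃ ψ : Lp ℂ r (volume.restrict (Ioo a b)), ∀ᵐ k : ℝ ∂volume.restrict U,
      weightedMGF h ψ (volume.restrict (Ioo a b)) (w * k)
        = κ * complexMGF id (volume.restrict (Ioo x₁ x₂)) (w * k)) ↔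
      Icc x₁ x₂ ⊆ h '' Icc a b := by
  refine ⟨fun ⟨ψ, hψ⟩ ↦ ?_, fun hsub ↦ ?_⟩
  · exact Icc_subset_image_of_weightedMGF_ae_eq hab.le hh.continuousOn
      ((Lp.memLp ψ).integrable hr) hx hκ hw hU hne hψ
  · obtain ⟨ψ, hψ⟩ := exists_Lp_weightedMGF_eq hab hh hx.le hsub κ r
    exact ⟨ψ, Eventually.of_forall fun k ↦ hψ (w * k)⟩

end Interval

lemma integral_Ioo_cexp_mul_const_add (p q c : ℝ) (z : ℂ) :
    ∫ t in Ioo p q, Complex.exp (z * (c + t)) =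
      complexMGF id (volume.restrict (Ioo (c + p) (c + q))) z := by
  have htrans : MeasurePreserving (c + ·) (volume.restrict (Ioo p q))
      (volume.restrict (Ioo (c + p) (c + q))) := by
    simpa using (measurePreserving_add_left volume c).restrict_preimage
      (measurableSet_Ioo (a := c + p) (b := c + q))
  have := htrans.integral_comp (measurableEmbedding_addLeft c) fun x : ℝ ↦ Complex.exp (z * x)
  simpa [complexMGF] using this

theorem testFunction_in_range_iff_in_strip_general
    {E : Type*} [NormedAddCommGroup E] [InnerProductSpace ℝ E]
    {tmin tmax T : ℝ} (htt : tmin < tmax) (hT : T = tmax - tmin) {K : ℝ} (hK : 0 < K)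
    {a : ℝ → E} (ha : ContDiffOn ℝ 1 a (Icc tmin tmax)) {xhat : E}
    {h : ℝ → ℝ} (hh : ∀ t, h t = t + inner ℝ xhat (a t)) {ξmin ξmax : ℝ}
    (hξmin : ξmin = sInf (h '' Icc tmin tmax)) (hξmax : ξmax = sSup (h '' Icc tmin tmax))
    {r r' : ℝ≥0∞} (hr : 1 ≤ r)
    {L : Lp ℂ r (volume.restrict (Ioo tmin tmax)) → Lp ℂ r' (volume.restrict (Ioo 0 K))}
    (hL : ∀ ψ : Lp ℂ r (volume.restrict (Ioo tmin tmax)),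
      (L ψ : ℝ → ℂ) =ᵐ[volume.restrict (Ioo 0 K)]
        fun τ ↦ ∫ t in Ioo tmin tmax, Complex.exp (-Complex.I * τ * (h t)) * ψ t)
    (y : E) :
    (∃ ψ : Lp ℂ r (volume.restrict (Ioo tmin tmax)),
      (L ψ : ℝ → ℂ) =ᵐ[volume.restrict (Ioo 0 K)]
        fun k ↦ (1 / (T : ℂ)) *
          ∫ t in Ioo tmin tmax, Complex.exp (-Complex.I * k * ((inner ℝ xhat y : ℝ) + t)))
    ↔ (ξmin - tmin ≤ inner ℝ xhat y ∧ (inner ℝ xhat y : ℝ) ≤ ξmax - tmax) := by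
  have hcontDiff : ContDiffOn ℝ 1 h (Icc tmin tmax) :=
    (contDiffOn_id.add (contDiffOn_const.inner ℝ ha)).congr fun t _ ↦ hh t
  have hκ : 1 / (T : ℂ) ≠ 0 :=
    one_div_ne_zero (Complex.ofReal_ne_zero.mpr (hT ▸ (sub_pos.mpr htt).ne'))
  have hrange := exists_Lp_weightedMGF_ae_eq_iff htt hcontDiff
    (add_lt_add_right htt (inner ℝ xhat y)) hκ hr (neg_ne_zero.mpr Complex.I_ne_zero)
    isOpen_Ioo (nonempty_Ioo.mpr hK)
  have himage : h '' Icc tmin tmax = Icc ξmin ξmax := by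
    rw [hξmin, hξmax, ← hcontDiff.continuousOn.image_Icc htt.le]
  rw [himage, Icc_subset_Icc_iff (by gcongr), ← sub_le_iff_le_add, ← le_sub_iff_add_le] at hrange
  simp_rw [integral_Ioo_cexp_mul_const_add]
  exact (exists_congr fun ψ ↦ ⟨(hL ψ).symm.trans, (hL ψ).trans⟩).trans hrange

/-- Let `x̂` be an observable direction (`ξ_max − ξ_min ≥ T`). Then for
every `y ∈ ℝ^d`, the test function `φ_y^{(x̂)}` belongs to the range of the data-to-pattern
operator `L^{(x̂)} : L²(t_min,t_max) → L²(0,K)` if and only if `y ∈ K_Γ^{(x̂)}`, i.e. iff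
`ξ_min − t_min ≤ x̂·y ≤ ξ_max − t_max`. -/
theorem testFunction_in_range_iff_in_strip
    {d : ℕ} (hd : d = 2 ∨ d = 3)
    (tmin tmax T : ℝ) (htmin : 0 < tmin) (htt : tmin < tmax)
    (hT : T = tmax - tmin)
    (K : ℝ) (hK : 0 < K)
    (a : ℝ → EuclideanSpace ℝ (Fin d))
    (ha : ContDiffOn ℝ 1 a (Set.Icc tmin tmax))
    (xhat : EuclideanSpace ℝ (Fin d)) (hxhat : ‖xhat‖ = 1)
    (h : ℝ → ℝ) (hh : ∀ t, h t = t + inner ℝ xhat (a t))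
    (ξmin ξmax : ℝ)
    (hξmin : ξmin = sInf (h '' Set.Icc tmin tmax))
    (hξmax : ξmax = sSup (h '' Set.Icc tmin tmax))
    (hobs : ξmax - ξmin ≥ T)
    (L : Lp ℂ 2 (volume.restrict (Set.Ioo tmin tmax)) →L[ℂ]
         Lp ℂ 2 (volume.restrict (Set.Ioo 0 K)))
    (hL : ∀ ψ : Lp ℂ 2 (volume.restrict (Set.Ioo tmin tmax)),
      (L ψ : ℝ → ℂ) =ᵐ[volume.restrict (Set.Ioo 0 K)]
        fun τ => ∫ t in Set.Ioo tmin tmax,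
          Complex.exp (-(Complex.I) * τ * (h t)) * ψ t) :
    ∀ y : EuclideanSpace ℝ (Fin d),
      (∃ ψ : Lp ℂ 2 (volume.restrict (Set.Ioo tmin tmax)),
        (L ψ : ℝ → ℂ) =ᵐ[volume.restrict (Set.Ioo 0 K)]
          fun k => (1 / (T : ℂ)) *
            ∫ t in Set.Ioo tmin tmax,
              Complex.exp (-(Complex.I) * k * ((inner ℝ xhat y : ℝ) + t)))
      ↔ (ξmin - tmin ≤ inner ℝ xhat y ∧ (inner ℝ xhat y : ℝ) ≤ ξmax - tmax) := fun y ↦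
  testFunction_in_range_iff_in_strip_general htt hT hK ha hh hξmin hξmax one_le_two hL y
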